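/- Let X_1, …, X_n be upper extended negatively dependent random variables in a sub-linear expectation space with dominating constant K ≥ 1 and 𝔼[X_k] ≤ 0 for each k. Set S_n = Σ_{k=1}^n X_k and B_n = Σ_{k=1}^n 𝔼[X_k²]. Then for all x > 0 and r > 0: 𝕍(S_n⁺ ≥ x) ≤ 𝕍(max_{k≤n} X_k⁺ ≥ x/r) + K·e^r·( r·B_n / (r·B_n + x²) )^r. -/

import Mathlib

open Filter MeasureTheory
open scoped ENNReal NNReal

noncomputable section

/-- A sub-linear expectation on `Ω`: a monotone, constant-preserving, sub-additive,
positively homogeneous functional on real random variables (with values in the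
extended reals, so that random variables without a finite expectation are allowed). -/
structure SublinearExp (Ω : Type) where
  E : (Ω → ℝ) → EReal
  mono : ∀ X Y : Ω → ℝ, (∀ ω, X ω ≤ Y ω) → E X ≤ E Y
  const_eq : ∀ c : ℝ, E (fun _ => c) = (c : EReal)
  subadd : ∀ X Y : Ω → ℝ, E (fun ω => X ω + Y ω) ≤ E X + E Y
  pos_homog : ∀ lam : ℝ, 0 ≤ lam → ∀ X : Ω → ℝ,
    E (fun ω => lam * X ω) = (lam : EReal) * E X

namespace SublinearExp

variable {Ω : Type}

/-- The conjugate expectation `ℰ[X] := −𝔼[−X]`. -/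
def cE (SL : SublinearExp Ω) (X : Ω → ℝ) : EReal := - SL.E fun ω => - X ω

/-- The upper capacity `𝕍(A) := inf{𝔼[ξ] : 1_A ≤ ξ}`. -/
def V (SL : SublinearExp Ω) (A : Set Ω) : ℝ :=
  sInf {x : ℝ | ∃ ξ : Ω → ℝ,
    (∀ ω, A.indicator (fun _ => (1 : ℝ)) ω ≤ ξ ω) ∧ SL.E ξ = (x : EReal)}

/-- The lower capacity `𝓋(A) := 1 − 𝕍(Aᶜ)`. -/
def vLow (SL : SublinearExp Ω) (A : Set Ω) : ℝ := 1 - SL.V Aᶜ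

/-- The Choquet integral `C_𝕍(X) := ∫₀^∞ 𝕍(X ≥ t) dt` (of a non-negative r.v.). -/
def Choquet (SL : SublinearExp Ω) (X : Ω → ℝ) : ℝ≥0∞ :=
  ∫⁻ t in Set.Ioi (0 : ℝ), ENNReal.ofReal (SL.V {ω | t ≤ X ω})

/-- The outer capacity `𝕍*(A) := inf{Σ_n 𝕍(A_n) : A ⊆ ∪_n A_n}`. -/
def Vout (SL : SublinearExp Ω) (A : Set Ω) : ℝ≥0∞ :=
  ⨅ (B : ℕ → Set Ω) (_ : A ⊆ ⋃ n, B n), ∑' n, ENNReal.ofReal (SL.V (B n))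

/-- The upper capacity is continuous: continuous from below and from above. -/
def ContinuousCapacity (SL : SublinearExp Ω) : Prop :=
  (∀ A : ℕ → Set Ω, Monotone A →
    Tendsto (fun n => SL.V (A n)) atTop (nhds (SL.V (⋃ n, A n)))) ∧
  (∀ A : ℕ → Set Ω, Antitone A →
    Tendsto (fun n => SL.V (A n)) atTop (nhds (SL.V (⋂ n, A n))))

/-- Bounded Lipschitz function on ℝ. -/
def IsBLip (g : ℝ → ℝ) : Prop :=
  (∃ L : NNReal, LipschitzWith L g) ∧ ∃ M : ℝ, ∀ x, |g x| ≤ M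

/-- Local Lipschitz function on ℝ: `|φ(x) − φ(y)| ≤ C(1+|x|^m+|y|^m)|x−y|`. -/
def IsLocLip (φ : ℝ → ℝ) : Prop :=
  ∃ (C : ℝ) (m : ℕ), ∀ x y : ℝ, |φ x - φ y| ≤ C * (1 + |x| ^ m + |y| ^ m) * |x - y|

/-- Upper extended negative dependence (finite family) with dominating constant `K`:
`𝔼[∏ g_i(X_i)] ≤ K ∏ 𝔼[g_i(X_i)]` for all non-negative bounded Lipschitz
non-decreasing `g_i`.  (Expectations of bounded functions are finite, whence
the `toReal`.) -/
def UENDFin (SL : SublinearExp Ω) (K : ℝ) {n : ℕ} (X : Fin n → Ω → ℝ) : Prop :=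
  ∀ g : Fin n → ℝ → ℝ, (∀ i, IsBLip (g i)) → (∀ i, Monotone (g i)) →
    (∀ i x, 0 ≤ g i x) →
    SL.E (fun ω => ∏ i, g i (X i ω)) ≤
      ((K * ∏ i, (SL.E fun ω => g i (X i ω)).toReal : ℝ) : EReal)

/-- Upper extended negative dependence for a sequence. -/
def UEND (SL : SublinearExp Ω) (K : ℝ) (X : ℕ → Ω → ℝ) : Prop :=
  ∀ n : ℕ, ∀ g : ℕ → ℝ → ℝ, (∀ i, IsBLip (g i)) → (∀ i, Monotone (g i)) →
    (∀ i x, 0 ≤ g i x) →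
    SL.E (fun ω => ∏ i ∈ Finset.range n, g i (X i ω)) ≤
      ((K * ∏ i ∈ Finset.range n, (SL.E fun ω => g i (X i ω)).toReal : ℝ) : EReal)

/-- Lower extended negative dependence for a sequence. -/
def LEND (SL : SublinearExp Ω) (K : ℝ) (X : ℕ → Ω → ℝ) : Prop :=
  ∀ n : ℕ, ∀ g : ℕ → ℝ → ℝ, (∀ i, IsBLip (g i)) → (∀ i, Antitone (g i)) →
    (∀ i x, 0 ≤ g i x) →
    SL.E (fun ω => ∏ i ∈ Finset.range n, g i (X i ω)) ≤
      ((K * ∏ i ∈ Finset.range n, (SL.E fun ω => g i (X i ω)).toReal : ℝ) : EReal)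

/-- Extended negative dependence = upper and lower END. -/
def END (SL : SublinearExp Ω) (K : ℝ) (X : ℕ → Ω → ℝ) : Prop :=
  UEND SL K X ∧ LEND SL K X

/-- Upper extended negative dependence under the conjugate expectation `ℰ`
(finite family). -/
def UENDFinConj (SL : SublinearExp Ω) (K : ℝ) {n : ℕ} (X : Fin n → Ω → ℝ) : Prop :=
  ∀ g : Fin n → ℝ → ℝ, (∀ i, IsBLip (g i)) → (∀ i, Monotone (g i)) →
    (∀ i x, 0 ≤ g i x) →
    SL.cE (fun ω => ∏ i, g i (X i ω)) ≤
      ((K * ∏ i, (SL.cE fun ω => g i (X i ω)).toReal : ℝ) : EReal)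

/-- Upper extended negative dependence under the conjugate expectation (sequence). -/
def UENDconj (SL : SublinearExp Ω) (K : ℝ) (X : ℕ → Ω → ℝ) : Prop :=
  ∀ n : ℕ, ∀ g : ℕ → ℝ → ℝ, (∀ i, IsBLip (g i)) → (∀ i, Monotone (g i)) →
    (∀ i x, 0 ≤ g i x) →
    SL.cE (fun ω => ∏ i ∈ Finset.range n, g i (X i ω)) ≤
      ((K * ∏ i ∈ Finset.range n, (SL.cE fun ω => g i (X i ω)).toReal : ℝ) : EReal)

/-- Lower extended negative dependence under the conjugate expectation (sequence). -/
def LENDconj (SL : SublinearExp Ω) (K : ℝ) (X : ℕ → Ω → ℝ) : Prop :=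
  ∀ n : ℕ, ∀ g : ℕ → ℝ → ℝ, (∀ i, IsBLip (g i)) → (∀ i, Antitone (g i)) →
    (∀ i x, 0 ≤ g i x) →
    SL.cE (fun ω => ∏ i ∈ Finset.range n, g i (X i ω)) ≤
      ((K * ∏ i ∈ Finset.range n, (SL.cE fun ω => g i (X i ω)).toReal : ℝ) : EReal)

/-- Extended negative dependence under the conjugate expectation. -/
def ENDconj (SL : SublinearExp Ω) (K : ℝ) (X : ℕ → Ω → ℝ) : Prop :=
  UENDconj SL K X ∧ LENDconj SL K X

/-- Extended independence of a sequence: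
`𝔼[∏ ψ_i(X_i)] = ∏ 𝔼[ψ_i(X_i)]` for non-negative local Lipschitz `ψ_i`,
whenever the expectations involved are finite. -/
def ExtIndep (SL : SublinearExp Ω) (X : ℕ → Ω → ℝ) : Prop :=
  ∀ n : ℕ, ∀ ψ : ℕ → ℝ → ℝ, (∀ i, IsLocLip (ψ i)) → (∀ i x, 0 ≤ ψ i x) →
    (∀ i ∈ Finset.range n, SL.E (fun ω => ψ i (X i ω)) ≠ ⊤) →
    SL.E (fun ω => ∏ i ∈ Finset.range n, ψ i (X i ω)) =
      ((∏ i ∈ Finset.range n, (SL.E fun ω => ψ i (X i ω)).toReal : ℝ) : EReal)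

/-- Extended independence of two random variables. -/
def ExtIndepPair (SL : SublinearExp Ω) (Y Z : Ω → ℝ) : Prop :=
  ∀ ψ₁ ψ₂ : ℝ → ℝ, IsLocLip ψ₁ → IsLocLip ψ₂ →
    (∀ x, 0 ≤ ψ₁ x) → (∀ x, 0 ≤ ψ₂ x) →
    SL.E (fun ω => ψ₁ (Y ω)) ≠ ⊤ → SL.E (fun ω => ψ₂ (Z ω)) ≠ ⊤ →
    SL.E (fun ω => ψ₁ (Y ω) * ψ₂ (Z ω)) =
      (((SL.E fun ω => ψ₁ (Y ω)).toReal * (SL.E fun ω => ψ₂ (Z ω)).toReal : ℝ) : EReal)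

/-- Identically distributed: `𝔼[φ(X_i)] = 𝔼[φ(X_1)]` for all local Lipschitz `φ`. -/
def IdentDist (SL : SublinearExp Ω) (X : ℕ → Ω → ℝ) : Prop :=
  ∀ (i : ℕ) (φ : ℝ → ℝ), IsLocLip φ →
    SL.E (fun ω => φ (X i ω)) = SL.E fun ω => φ (X 0 ω)

end SublinearExp

/-- `log x = ln(x ∨ e)`. -/
def paperLog (x : ℝ) : ℝ := Real.log (max x (Real.exp 1))

/-- `a_n = √(2 n log log n)` with the above convention for `log`. -/
def lilA (n : ℕ) : ℝ := Real.sqrt (2 * n * paperLog (paperLog n))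

/-- The function `u ↦ (exp u - 1 - u) / u ^ 2` is nondecreasing, in a division-free form. -/
theorem exp_sub_one_sub_mul_sq_le {u v : ℝ} (huv : u ≤ v) (hv : 0 ≤ v) :
    (Real.exp u - 1 - u) * v ^ 2 ≤ (Real.exp v - 1 - v) * u ^ 2 := by
  rcases le_total 0 u with hu | hu
  · have hasSum_tail (w : ℝ) :
        HasSum (fun n : ℕ => w ^ (n + 2) / (n + 2).factorial) (Real.exp w - 1 - w) := by
      have h := NormedSpace.expSeries_div_hasSum_exp w
      rw [← Real.exp_eq_exp_ℝ, ← hasSum_nat_add_iff' 2] at h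
      simpa [Finset.sum_range_succ, sub_sub] using h
    refine hasSum_le (fun n => ?_) ((hasSum_tail u).mul_right (v ^ 2))
      ((hasSum_tail v).mul_right (u ^ 2))
    have hpow : u ^ n ≤ v ^ n := pow_le_pow_left₀ hu huv n
    calc u ^ (n + 2) / (n + 2).factorial * v ^ 2
        = u ^ n * (u ^ 2 * v ^ 2 / (n + 2).factorial) := by ring
      _ ≤ v ^ n * (u ^ 2 * v ^ 2 / (n + 2).factorial) := by gcongr
      _ = v ^ (n + 2) / (n + 2).factorial * u ^ 2 := by ring
  · have hexp_v := Real.quadratic_le_exp_of_nonneg hv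
    have hexp_neg := Real.quadratic_le_exp_of_nonneg (neg_nonneg.2 hu)
    have hexp_u : Real.exp u ≤ 1 + u + u ^ 2 / 2 := by
      have hmul : Real.exp u * Real.exp (-u) = 1 := by rw [← Real.exp_add]; simp
      have hpos : 0 < 1 + u + u ^ 2 / 2 := by nlinarith [sq_nonneg (u + 1)]
      have hprod : 1 ≤ (1 + u + u ^ 2 / 2) * Real.exp (-u) := by
        nlinarith [mul_le_mul_of_nonneg_left hexp_neg hpos.le, sq_nonneg (u ^ 2)]
      exact le_of_mul_le_mul_right (hmul.trans_le hprod) (Real.exp_pos _)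
    nlinarith [mul_le_mul_of_nonneg_right hexp_u (sq_nonneg v),
      mul_le_mul_of_nonneg_right hexp_v (sq_nonneg u)]

/-- Quadratic upper bound for `exp (t * z)` on the half-line `z ≤ y`. -/
theorem exp_mul_le_quadratic {t y z : ℝ} (ht : 0 < t) (hy : 0 < y) (hz : z ≤ y) :
    Real.exp (t * z) ≤ 1 + t * z + (Real.exp (t * y) - 1 - t * y) / y ^ 2 * z ^ 2 := by
  have h := exp_sub_one_sub_mul_sq_le (mul_le_mul_of_nonneg_left hz ht.le) (mul_pos ht hy).le
  have h' : (Real.exp (t * z) - 1 - t * z) * y ^ 2 ≤ (Real.exp (t * y) - 1 - t * y) * z ^ 2 := by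
    refine le_of_mul_le_mul_left ?_ (pow_pos ht 2)
    nlinarith [h]
  have : Real.exp (t * z) - 1 - t * z ≤ (Real.exp (t * y) - 1 - t * y) * z ^ 2 / y ^ 2 := by
    rwa [le_div_iff₀ (pow_pos hy 2)]
  rw [div_mul_eq_mul_div]
  linarith

namespace SublinearExp

/-- The exponential of a random variable truncated from above is a bounded Lipschitz function. -/
theorem isBLip_exp_mul_min {t : ℝ} (ht : 0 ≤ t) (y : ℝ) :
    IsBLip fun z => Real.exp (t * min z y) := by
  have hbound (z : ℝ) : Real.exp (t * min z y) ≤ Real.exp (t * y) :=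
    Real.exp_le_exp.2 (mul_le_mul_of_nonneg_left (min_le_right _ _) ht)
  refine ⟨⟨(Real.exp (t * y) * t).toNNReal, LipschitzWith.of_le_add_mul _ fun a b => ?_⟩,
    Real.exp (t * y), fun z => by rw [abs_of_pos (Real.exp_pos _)]; exact hbound z⟩
  rw [Real.coe_toNNReal _ (by positivity), Real.dist_eq]
  have hmin : min a y - min b y ≤ |a - b| :=
    (le_abs_self _).trans ((abs_min_sub_min_le_max a y b y).trans (by simp))
  have htangent : Real.exp (t * min a y) - Real.exp (t * min b y) ≤
      Real.exp (t * min a y) * (t * (min a y - min b y)) := by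
    have h := Real.add_one_le_exp (t * min b y - t * min a y)
    have hmul := mul_le_mul_of_nonneg_left h (Real.exp_pos (t * min a y)).le
    rw [← Real.exp_add, add_sub_cancel] at hmul
    linarith
  have hle : Real.exp (t * min a y) * (t * (min a y - min b y)) ≤
      Real.exp (t * y) * (t * |a - b|) :=
    (mul_le_mul_of_nonneg_left (mul_le_mul_of_nonneg_left hmin ht) (Real.exp_pos _).le).trans
      (mul_le_mul_of_nonneg_right (hbound a) (by positivity))
  linarith

variable {Ω : Type} (SL : SublinearExp Ω)

theorem E_nonneg {ξ : Ω → ℝ} (hξ : ∀ ω, 0 ≤ ξ ω) : 0 ≤ SL.E ξ := by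
  simpa using (SL.const_eq 0).symm.trans_le (SL.mono (fun _ => 0) ξ hξ)

/-- The capacity of `A` is at most that of `M` plus any bound for the expectation of a
nonnegative random variable that is at least one on `A \ M`. -/
theorem V_le_V_add {A M : Set Ω} {η : Ω → ℝ} {c : ℝ} (hη : ∀ ω, 0 ≤ η ω)
    (hAM : ∀ ω ∈ A, ω ∉ M → 1 ≤ η ω) (hc : SL.E η ≤ c) : SL.V A ≤ SL.V M + c := by
  rw [← sub_le_iff_le_add]
  refine le_csInf ⟨1, fun _ => 1, fun ω => Set.indicator_le_self' (by simp) ω,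
    SL.const_eq 1⟩ ?_
  rintro v ⟨ξ, hξ, hv⟩
  have hξ0 (ω : Ω) : 0 ≤ ξ ω := (Set.indicator_nonneg (by simp) ω).trans (hξ ω)
  have hsum0 : 0 ≤ SL.E fun ω => ξ ω + η ω := SL.E_nonneg fun ω => add_nonneg (hξ0 ω) (hη ω)
  have hsum : (SL.E fun ω => ξ ω + η ω) ≤ ((v + c : ℝ) : EReal) := by
    rw [EReal.coe_add, ← hv]
    exact (SL.subadd ξ η).trans (add_le_add le_rfl hc)
  have hcoe : ((SL.E fun ω => ξ ω + η ω).toReal : EReal) = SL.E fun ω => ξ ω + η ω :=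
    EReal.coe_toReal (ne_top_of_le_ne_top (EReal.coe_ne_top _) hsum)
      (ne_bot_of_le_ne_bot EReal.zero_ne_bot hsum0)
  have hle : (SL.E fun ω => ξ ω + η ω).toReal ≤ v + c := by
    rwa [← EReal.coe_le_coe_iff, hcoe]
  have hV : SL.V A ≤ (SL.E fun ω => ξ ω + η ω).toReal := by
    refine csInf_le ⟨0, ?_⟩ ⟨fun ω => ξ ω + η ω, fun ω => ?_, hcoe.symm⟩
    · rintro w ⟨ζ, hζ, hw⟩
      have := SL.E_nonneg fun ω => (Set.indicator_nonneg (by simp) ω).trans (hζ ω)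
      rw [hw] at this
      exact_mod_cast this
    · by_cases hA : ω ∈ A
      · rw [Set.indicator_of_mem hA]
        by_cases hM : ω ∈ M
        · have := hξ ω
          rw [Set.indicator_of_mem hM] at this
          linarith [hη ω]
        · linarith [hξ0 ω, hAM ω hA hM]
      · rw [Set.indicator_of_notMem hA]
        exact add_nonneg (hξ0 ω) (hη ω)
  linarith

/-- Bound for the exponential moment of a truncated random variable with nonpositive mean. -/
theorem E_exp_mul_min_le {Y : Ω → ℝ} {b t y : ℝ} (hmean : SL.E Y ≤ 0)
    (hvar : (SL.E fun ω => Y ω ^ 2) ≤ b) (ht : 0 < t) (hy : 0 < y) :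
    (SL.E fun ω => Real.exp (t * min (Y ω) y)) ≤
      ((1 + (Real.exp (t * y) - 1 - t * y) / y ^ 2 * b : ℝ) : EReal) := by
  set c := (Real.exp (t * y) - 1 - t * y) / y ^ 2
  have hc : 0 ≤ c := div_nonneg (by linarith [Real.add_one_le_exp (t * y)]) (sq_nonneg y)
  have hpoint (ω : Ω) : Real.exp (t * min (Y ω) y) ≤ 1 + (t * Y ω + c * Y ω ^ 2) := by
    rcases le_total (Y ω) y with h | h
    · rw [min_eq_left h, ← add_assoc]
      exact exp_mul_le_quadratic ht hy h
    · rw [min_eq_right h]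
      have hexp := exp_mul_le_quadratic ht hy le_rfl
      have hlin : t * y ≤ t * Y ω := mul_le_mul_of_nonneg_left h ht.le
      have hsq : c * y ^ 2 ≤ c * Y ω ^ 2 :=
        mul_le_mul_of_nonneg_left (pow_le_pow_left₀ hy.le h 2) hc
      linarith
  calc (SL.E fun ω => Real.exp (t * min (Y ω) y))
      ≤ SL.E fun ω => 1 + (t * Y ω + c * Y ω ^ 2) := SL.mono _ _ hpoint
    _ ≤ (SL.E fun _ => 1) + ((SL.E fun ω => t * Y ω) + SL.E fun ω => c * Y ω ^ 2) :=
        (SL.subadd _ _).trans (add_le_add le_rfl (SL.subadd _ _))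
    _ = 1 + ((t : EReal) * SL.E Y + (c : EReal) * SL.E fun ω => Y ω ^ 2) := by
        rw [SL.const_eq, SL.pos_homog t ht.le, SL.pos_homog c hc]; simp
    _ ≤ 1 + (0 + (c : EReal) * (b : EReal)) := by
        refine add_le_add le_rfl (add_le_add ?_ ?_)
        · exact EReal.mul_nonpos_iff.2 (Or.inl ⟨by exact_mod_cast ht.le, hmean⟩)
        · exact mul_le_mul_of_nonneg_left hvar (by exact_mod_cast hc)
    _ = ((1 + c * b : ℝ) : EReal) := by simp

/-- Exponential tail bound obtained by truncating at level `y`, with a free parameter `t`. -/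
theorem UENDFin.V_sum_le {SL : SublinearExp Ω} {n : ℕ} {X : Fin n → Ω → ℝ} {K : ℝ} (hK : 0 ≤ K)
    (hX : UENDFin SL K X) (hmean : ∀ k, SL.E (X k) ≤ 0) {b : Fin n → ℝ}
    (hb : ∀ k, (SL.E fun ω => X k ω ^ 2) ≤ b k) {x y t : ℝ} (hx : 0 < x) (hy : 0 < y)
    (ht : 0 < t) :
    SL.V {ω | x ≤ max (∑ k, X k ω) 0} ≤ SL.V {ω | ∃ k, y ≤ max (X k ω) 0} +
      K * Real.exp ((Real.exp (t * y) - 1 - t * y) / y ^ 2 * ∑ k, b k - t * x) := by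
  set c := (Real.exp (t * y) - 1 - t * y) / y ^ 2
  have hmoment (k : Fin n) :
      (SL.E fun ω => Real.exp (t * min (X k ω) y)).toReal ≤ Real.exp (c * b k) := by
    have hnonneg := SL.E_nonneg fun ω => (Real.exp_pos (t * min (X k ω) y)).le
    have h := EReal.toReal_le_toReal (SL.E_exp_mul_min_le (hmean k) (hb k) ht hy)
      (ne_bot_of_le_ne_bot EReal.zero_ne_bot hnonneg) (EReal.coe_ne_top _)
    rw [EReal.toReal_coe] at h
    linarith [Real.add_one_le_exp (c * b k)]
  have hprod : ∏ k, (SL.E fun ω => Real.exp (t * min (X k ω) y)).toReal ≤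
      Real.exp (c * ∑ k, b k) := by
    rw [Finset.mul_sum, Real.exp_sum]
    exact Finset.prod_le_prod (fun k _ => EReal.toReal_nonneg
      (SL.E_nonneg fun ω => (Real.exp_pos _).le)) fun k _ => hmoment k
  have hjoint := hX (fun _ z => Real.exp (t * min z y)) (fun _ => isBLip_exp_mul_min ht.le y)
    (fun _ a a' haa' => Real.exp_le_exp.2
      (mul_le_mul_of_nonneg_left (min_le_min_right y haa') ht.le))
    (fun _ _ => (Real.exp_pos _).le)
  refine SL.V_le_V_add
    (η := fun ω => Real.exp (-(t * x)) * ∏ k, Real.exp (t * min (X k ω) y))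
    (fun ω => by positivity) (fun ω hA hM => ?_) ?_
  · simp only [Set.mem_ofPred_eq, not_exists, le_max_iff, hx.not_ge, hy.not_ge, or_false,
      not_le] at hA hM
    rw [← Real.exp_sum, ← Finset.mul_sum, ← Real.exp_add,
      Finset.sum_congr rfl fun k _ => min_eq_left (hM k).le]
    exact Real.one_le_exp (by linarith [mul_le_mul_of_nonneg_left hA ht.le])
  · rw [SL.pos_homog _ (Real.exp_pos _).le]
    refine (mul_le_mul_of_nonneg_left hjoint
      (by exact_mod_cast (Real.exp_pos (-(t * x))).le)).trans ?_
    rw [← EReal.coe_mul, EReal.coe_le_coe_iff, sub_eq_neg_add, Real.exp_add, mul_left_comm]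
    gcongr

end SublinearExp

/-- The optimal choice of the parameter in the exponential tail bound. -/
theorem exp_bennett_exponent_le {B x r : ℝ} (hB : 0 < B) (hx : 0 < x) (hr : 0 < r) :
    ∃ t > 0, Real.exp ((Real.exp (t * (x / r)) - 1 - t * (x / r)) / (x / r) ^ 2 * B - t * x) ≤
      Real.exp r * (r * B / (r * B + x ^ 2)) ^ r := by
  have hq : 0 < x ^ 2 / (r * B) := by positivity
  set L := Real.log (1 + x ^ 2 / (r * B)) with hL
  have hLpos : 0 < L := Real.log_pos (by linarith)
  refine ⟨L * (r / x), by positivity, ?_⟩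
  have hbase : r * B / (r * B + x ^ 2) = Real.exp (-L) := by
    rw [Real.exp_neg, hL, Real.exp_log (by positivity)]
    field_simp
  have hcancel : L * (r / x) * (x / r) = L := by field_simp
  rw [hbase, ← Real.exp_mul, ← Real.exp_add, Real.exp_le_exp, hcancel, hL,
    Real.exp_log (by positivity), ← hL]
  have hexponent : (1 + x ^ 2 / (r * B) - 1 - L) / (x / r) ^ 2 * B - L * (r / x) * x =
      r + -L * r - L * (B * r ^ 2 / x ^ 2) := by
    field_simp
    ring
  rw [hexponent]
  have : 0 ≤ L * (B * r ^ 2 / x ^ 2) := by positivity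
  linarith

/-- Theorem 3.1(c), inequality (3.3): tail bound for `S_n⁺`. -/
theorem stmt2 {Ω : Type} (SL : SublinearExp Ω) (n : ℕ) (X : Fin n → Ω → ℝ)
    (K : ℝ) (hK : 1 ≤ K)
    (hUEND : SublinearExp.UENDFin SL K X)
    (hmean : ∀ k, SL.E (X k) ≤ 0)
    (B : ℝ) (hB : (B : EReal) = ∑ k, SL.E fun ω => (X k ω) ^ 2) :
    ∀ x r : ℝ, 0 < x → 0 < r →
      SL.V {ω | x ≤ max (∑ k, X k ω) 0} ≤
        SL.V {ω | ∃ k, x / r ≤ max (X k ω) 0} +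
          K * Real.exp r * (r * B / (r * B + x ^ 2)) ^ r := by
  intro x r hx hr
  have hnonneg (k : Fin n) : 0 ≤ SL.E fun ω => (X k ω) ^ 2 :=
    SL.E_nonneg fun ω => sq_nonneg _
  have hcoe (k : Fin n) : ((SL.E fun ω => (X k ω) ^ 2).toReal : EReal) =
      SL.E fun ω => (X k ω) ^ 2 := by
    refine EReal.coe_toReal (ne_top_of_le_ne_top (EReal.coe_ne_top B) ?_)
      (ne_bot_of_le_ne_bot EReal.zero_ne_bot (hnonneg k))
    rw [hB]
    exact Finset.single_le_sum (fun i _ => hnonneg i) (Finset.mem_univ k)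
  set b : Fin n → ℝ := fun k => (SL.E fun ω => (X k ω) ^ 2).toReal
  have hBsum : B = ∑ k, b k := by
    rw [← EReal.coe_eq_coe_iff, hB, ← Finset.sum_congr rfl fun k _ => hcoe k]
    exact (map_sum (⟨⟨Real.toEReal, EReal.coe_zero⟩, EReal.coe_add⟩ : ℝ →+ EReal) b _).symm
  have hBnonneg : 0 ≤ B := hBsum ▸ Finset.sum_nonneg fun k _ => EReal.toReal_nonneg (hnonneg k)
  -- Every larger variance bound works; let it decrease to the true one, which may vanish.
  have hlim : Tendsto (fun B' : ℝ => SL.V {ω | ∃ k, x / r ≤ max (X k ω) 0} +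
      K * Real.exp r * (r * B' / (r * B' + x ^ 2)) ^ r) (nhdsWithin B (Set.Ioi B))
      (nhds (SL.V {ω | ∃ k, x / r ≤ max (X k ω) 0} +
        K * Real.exp r * (r * B / (r * B + x ^ 2)) ^ r)) := by
    have hden : r * B + x ^ 2 ≠ 0 := by positivity
    have hcont : ContinuousAt (fun B' : ℝ => r * B' / (r * B' + x ^ 2)) B := by
      fun_prop (disch := exact hden)
    exact (((hcont.rpow_const (Or.inr hr.le)).const_mul _).const_add _).tendsto.mono_left
      nhdsWithin_le_nhds
  refine ge_of_tendsto hlim (eventually_nhdsWithin_of_forall fun B' (hB' : B < B') => ?_)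
  obtain ⟨t, ht, hle⟩ := exp_bennett_exponent_le (hBnonneg.trans_lt hB') hx hr
  refine (hUEND.V_sum_le (by linarith) hmean (fun k => (hcoe k).ge) hx (div_pos hx hr) ht).trans
    (add_le_add le_rfl ?_)
  rw [mul_assoc]
  refine mul_le_mul_of_nonneg_left (le_trans ?_ hle) (by linarith)
  rw [← hBsum]
  have : 0 ≤ (Real.exp (t * (x / r)) - 1 - t * (x / r)) / (x / r) ^ 2 :=
    div_nonneg (by linarith [Real.add_one_le_exp (t * (x / r))]) (sq_nonneg _)
  gcongr
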